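/- Let T be the tree of all subsets of ℚ that are well ordered by the usual order of the real line, ordered by end-extension (t ≤ s iff t is an initial segment of s, i.e., t ⊆ s and every element of s∖t is greater than every element of t). Let L ⊆ 2^T be the tree space of T. Then L is a Boolean image of a path-connected compact Hausdorff space, but L is not a Boolean image of any convex compact subset of [0,1]^Γ, for any set Γ. -/

import Mathlib

open Set

/-- `φ` is an isomorphism of the family `𝒢` of subsets of `X` with a family of
pseudoclopens of the topological space `K`: `φ` is injective on `𝒢`, each `φ a`
is a pseudoclopen (a pair of a closed set contained in an open set), and for all
finite disjoint `F, H ⊆ 𝒢` (i.e. pairwise distinct `a₁,…,aₙ,b₁,…,bₘ ∈ 𝒢`) the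
two implications between vanishing of `⋂ F \ ⋃ H` and of the corresponding
combinations of the pseudoclopens hold. -/
def IsPseudoclopenIso {X K : Type*} [TopologicalSpace K]
    (𝒢 : Set (Set X)) (φ : Set X → Set K × Set K) : Prop :=
  Set.InjOn φ 𝒢 ∧
  (∀ a ∈ 𝒢, IsClosed (φ a).1 ∧ IsOpen (φ a).2 ∧ (φ a).1 ⊆ (φ a).2) ∧
  ∀ F H : Set (Set X), F.Finite → H.Finite → F ⊆ 𝒢 → H ⊆ 𝒢 → Disjoint F H →
    ((⋂₀ F \ ⋃₀ H = ∅ → (⋂ a ∈ F, (φ a).2) \ (⋃ a ∈ H, (φ a).1) = ∅) ∧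
     ((⋂ a ∈ F, (φ a).1) \ (⋃ a ∈ H, (φ a).2) = ∅ → ⋂₀ F \ ⋃₀ H = ∅))

/-- A family of subsets of `L` separates the points of `L`. -/
def SeparatesPoints' {L : Type*} (𝒢 : Set (Set L)) : Prop :=
  ∀ x y : L, x ≠ y → ∃ a ∈ 𝒢, (x ∈ a ∧ y ∉ a) ∨ (y ∈ a ∧ x ∉ a)

/-- `L` is a Boolean image of `K`: there is a point-separating family of clopen
subsets of `L` which is isomorphic to a family of pseudoclopens of `K`. -/
def IsBooleanImage (L K : Type*) [TopologicalSpace L] [TopologicalSpace K] : Prop :=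
  ∃ (𝒢 : Set (Set L)) (φ : Set L → Set K × Set K),
    (∀ a ∈ 𝒢, IsClopen a) ∧ SeparatesPoints' 𝒢 ∧ IsPseudoclopenIso 𝒢 φ

/-- The tree space of `T`: the characteristic functions (into `Bool`) of the
downward closed chains of `T`, as a subset of the Cantor cube `2^T`. -/
def TreeSpace (T : Type*) [PartialOrder T] : Set (T → Bool) :=
  {x | IsChain (· ≤ ·) {t | x t = true} ∧ ∀ s t : T, s ≤ t → x t = true → x s = true}

/-- The tree of all subsets of `ℚ` that are well ordered by the usual order. -/
def WOQ : Type := {t : Set ℚ // t.IsWF}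

/-- The end-extension partial order on `WOQ`: `t ≤ s` iff `t ⊆ s` and every
element of `s \ t` is greater than every element of `t`. -/
instance : PartialOrder WOQ where
  le t s := t.1 ⊆ s.1 ∧ ∀ a ∈ s.1, a ∉ t.1 → ∀ b ∈ t.1, b < a
  le_refl t := ⟨subset_rfl, fun a ha hna _ _ => absurd ha hna⟩
  le_trans := by
    rintro t s r ⟨hts, hts'⟩ ⟨hsr, hsr'⟩
    refine ⟨hts.trans hsr, fun a har hat b hbt => ?_⟩
    by_cases has : a ∈ s.1
    · exact hts' a has hat b hbt
    · exact hsr' a har has b (hts hbt)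
  le_antisymm := by
    rintro t s ⟨hts, _⟩ ⟨hst, _⟩
    exact Subtype.ext (subset_antisymm hts hst)

open Classical in
/-- the weight of a set of rationals -/
noncomputable def wtQ (s : Set ℚ) : ℝ :=
  ∑' q : ℚ, s.indicator (fun q => ((1:ℝ) / 2) ^ (Encodable.encode q)) q

lemma wtQ_summable (s : Set ℚ) :
    Summable (s.indicator (fun q : ℚ => ((1:ℝ) / 2) ^ (Encodable.encode q))) :=
  (summable_geometric_two_encode (ι := ℚ)).indicator s

lemma wtQ_nonneg (s : Set ℚ) : 0 ≤ wtQ s :=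
  tsum_nonneg fun q => Set.indicator_nonneg (fun _ _ => by positivity) q

lemma wtQ_le_univ (s : Set ℚ) : wtQ s ≤ wtQ Set.univ :=
  (wtQ_summable s).tsum_le_tsum
    (fun q => Set.indicator_le_indicator_of_subset (Set.subset_univ s) (fun _ => by positivity) q)
    (wtQ_summable Set.univ)

lemma wtQ_add_le {s s' : Set ℚ} (h : s ⊆ s') {q : ℚ} (hq : q ∈ s') (hq' : q ∉ s) :
    wtQ s + ((1:ℝ) / 2) ^ (Encodable.encode q) ≤ wtQ s' := by
  have h1 : wtQ {q} = ((1:ℝ) / 2) ^ (Encodable.encode q) := by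
    unfold wtQ
    rw [tsum_eq_single q]
    · simp
    · intro b hb
      simp [hb]
  rw [← h1]
  unfold wtQ
  rw [← (wtQ_summable s).tsum_add (wtQ_summable {q})]
  refine ((wtQ_summable s).add (wtQ_summable {q})).tsum_le_tsum (fun p => ?_) (wtQ_summable s')
  have hp : (0:ℝ) ≤ (1 / 2) ^ (Encodable.encode p) := by positivity
  by_cases h2 : p ∈ s
  · have h3 : p ≠ q := fun h => hq' (h ▸ h2)
    simp [h2, h h2, h3]
  · by_cases h3 : p = q
    · subst h3; simp [h2, hq]
    · by_cases h4 : p ∈ s' <;> simp [h2, h3, h4]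

lemma exists_gap (S : Set WOQ) (hS : IsChain (· ≤ ·) S) (s : WOQ) (hs : s ∈ S) :
    ∃ δ : ℝ, 0 < δ ∧ δ ≤ 1 ∧ ∀ s' ∈ S, s < s' → wtQ s.1 + δ ≤ wtQ s'.1 := by
  by_cases h : ∃ s' ∈ S, s < s'
  · obtain ⟨s', hs', hlt⟩ := h
    have hne : (s'.1 \ s.1).Nonempty := by
      rw [Set.nonempty_iff_ne_empty]
      intro h
      exact hlt.not_ge (by
        have : s'.1 ⊆ s.1 := Set.sdiff_eq_empty.mp h
        have h2 : s = s' := le_antisymm hlt.le ⟨this, fun a ha hna => absurd (hlt.le.1 ha) hna⟩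
        rw [h2])
    have hwf : (s'.1 \ s.1).IsWF := s'.2.mono Set.sdiff_subset
    set q := hwf.min hne with hq
    have hqm : q ∈ s'.1 \ s.1 := hwf.min_mem hne
    refine ⟨(1/2) ^ (Encodable.encode q), by positivity, pow_le_one₀ (by norm_num) (by norm_num), ?_⟩
    intro s'' hs'' hlt'
    refine wtQ_add_le hlt'.le.1 ?_ hqm.2
    by_contra hqs
    rcases hS.total hs' hs'' with h1 | h1
    · exact hqs (h1.1 hqm.1)
    · have : ∃ p ∈ s''.1, p ∉ s.1 := by
        by_contra hcon
        push Not at hcon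
        have h2 : s = s'' := le_antisymm hlt'.le ⟨hcon, fun a ha hna => absurd (hlt'.le.1 ha) hna⟩
        exact hlt'.ne h2
      obtain ⟨p, hp, hps⟩ := this
      have h3 : q ≤ p := hwf.min_le hne ⟨h1.1 hp, hps⟩
      exact absurd (h1.2 q hqm.1 hqs p hp) (not_lt.mpr h3)
  · push Not at h
    exact ⟨1, one_pos, le_rfl, fun s' hs' hlt => absurd hlt (h s' hs')⟩

/-- The connected tree space of `WOQ`. -/
def KK : Set (WOQ → ℝ) :=
  {f | (∀ t, f t ∈ Set.Icc (0:ℝ) 1) ∧ (∀ s t, s < t → (f t = 0 ∨ f s = 1)) ∧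
    (∀ s t, ¬ s ≤ t → ¬ t ≤ s → (f s = 0 ∨ f t = 0))}

lemma KK_isCompact : IsCompact KK := by
  have h1 : IsCompact (Set.pi Set.univ (fun _ : WOQ => Set.Icc (0:ℝ) 1)) :=
    isCompact_univ_pi fun _ => isCompact_Icc
  refine h1.of_isClosed_subset ?_ (fun f hf t _ => hf.1 t)
  have e : ∀ (t : WOQ) (c : ℝ), IsClosed {f : WOQ → ℝ | f t = c} := fun t c =>
    isClosed_eq (continuous_apply t) continuous_const
  have hK : KK = (⋂ t, {f : WOQ → ℝ | f t ∈ Set.Icc (0:ℝ) 1}) ∩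
      ((⋂ s, ⋂ t, ⋂ (_ : s < t), ({f : WOQ → ℝ | f t = 0} ∪ {f : WOQ → ℝ | f s = 1})) ∩
      (⋂ s, ⋂ t, ⋂ (_ : ¬ s ≤ t), ⋂ (_ : ¬ t ≤ s),
        ({f : WOQ → ℝ | f s = 0} ∪ {f : WOQ → ℝ | f t = 0}))) := by
    ext f
    simp [KK]
  rw [hK]
  refine IsClosed.inter ?_ (IsClosed.inter ?_ ?_)
  · exact isClosed_iInter fun t => isClosed_Icc.preimage (continuous_apply t)
  · exact isClosed_iInter fun s => isClosed_iInter fun t => isClosed_iInter fun _ =>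
      (e t 0).union (e s 1)
  · exact isClosed_iInter fun s => isClosed_iInter fun t => isClosed_iInter fun _ =>
      isClosed_iInter fun _ => (e s 0).union (e t 0)

lemma KK_zero : (fun _ => (0:ℝ)) ∈ KK := by
  refine ⟨fun t => by simp, fun s t _ => Or.inl rfl, fun s t _ _ => Or.inl rfl⟩

lemma KK_joined (f : KK) : Joined (⟨_, KK_zero⟩ : KK) f := by
  obtain ⟨f, hf⟩ := f
  set S : Set WOQ := {t | f t ≠ 0} with hSdef
  have hS : IsChain (· ≤ ·) S := by
    intro s hs t ht _
    by_contra hcon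
    push Not at hcon
    rcases hf.2.2 s t hcon.1 hcon.2 with h | h
    · exact hs h
    · exact ht h
  have hgap : ∀ s : WOQ, ∃ δ : ℝ, 0 < δ ∧ δ ≤ 1 ∧
      (s ∈ S → ∀ s' ∈ S, s < s' → wtQ s.1 + δ ≤ wtQ s'.1) := by
    intro s
    by_cases hs : s ∈ S
    · obtain ⟨δ, h1, h2, h3⟩ := exists_gap S hS s hs
      exact ⟨δ, h1, h2, fun _ => h3⟩
    · exact ⟨1, one_pos, le_rfl, fun h => absurd h hs⟩
  choose δ hδ0 hδ1 hδ using hgap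
  let c : ℝ → WOQ → ℝ := fun r s => max 0 (min 1 ((r - wtQ s.1) / δ s))
  let h : ℝ → WOQ → ℝ := fun r s => min (f s) (c r s)
  have hc0 : ∀ r s, 0 ≤ c r s := fun r s => le_max_left _ _
  have hz : ∀ r s, f s = 0 → h r s = 0 := fun r s hs => by
    simp only [h, hs]; exact min_eq_left (hc0 r s)
  have hK : ∀ r, h r ∈ KK := by
    intro r
    refine ⟨fun t => ⟨le_min (hf.1 t).1 (hc0 r t), (min_le_left _ _).trans (hf.1 t).2⟩, ?_, ?_⟩
    · intro s t hst
      rcases hf.2.1 s t hst with h1 | h1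
      · exact Or.inl (hz r t h1)
      · by_cases ht : f t = 0
        · exact Or.inl (hz r t ht)
        have hs : s ∈ S := by simp [hSdef, h1]
        have hg := hδ s hs t ht hst
        by_cases hr : r ≤ wtQ t.1
        · left
          have : c r t = 0 := by
            apply max_eq_left
            refine (min_le_right _ _).trans ?_
            exact div_nonpos_of_nonpos_of_nonneg (by linarith) (hδ0 t).le
          simp only [h, this]
          exact min_eq_right (hf.1 t).1
        · right
          have : c r s = 1 := by
            have : 1 ≤ (r - wtQ s.1) / δ s := by
              rw [le_div_iff₀ (hδ0 s)]; linarith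
            simp only [c, min_eq_left this]; simp
          simp only [h, this, h1]; simp
    · intro s t h1 h2
      rcases hf.2.2 s t h1 h2 with h | h
      · exact Or.inl (hz r s h)
      · exact Or.inr (hz r t h)
  have hcont : Continuous (fun r => (⟨h r, hK r⟩ : KK)) := by
    refine Continuous.subtype_mk (continuous_pi fun s => ?_) _
    simp only [h, c]
    fun_prop
  set R := wtQ Set.univ + 1 with hR
  refine ⟨⟨⟨fun t => ⟨h (t.1 * R), hK _⟩, ?_⟩, ?_, ?_⟩⟩
  · exact hcont.comp (by fun_prop)
  · apply Subtype.ext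
    funext s
    have : c (0 * R) s = 0 := by
      apply max_eq_left
      refine (min_le_right _ _).trans ?_
      refine div_nonpos_of_nonpos_of_nonneg ?_ (hδ0 s).le
      have := wtQ_nonneg s.1
      linarith
    simp only [h, Set.Icc.coe_zero, this]
    exact min_eq_right (hf.1 s).1
  · apply Subtype.ext
    funext s
    have : c (1 * R) s = 1 := by
      have : 1 ≤ (1 * R - wtQ s.1) / δ s := by
        rw [le_div_iff₀ (hδ0 s)]
        have := wtQ_le_univ s.1
        have := hδ1 s
        linarith
      simp only [c, min_eq_left this]; simp
    simp only [h, Set.Icc.coe_one, this]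
    exact min_eq_left (hf.1 s).2

lemma WOQ_total_below {s s' t : WOQ} (h : s ≤ t) (h' : s' ≤ t) : s ≤ s' ∨ s' ≤ s := by
  by_cases hsub : s.1 ⊆ s'.1
  · left
    exact ⟨hsub, fun a ha hna => h.2 a (h'.1 ha) hna⟩
  · right
    obtain ⟨p, hp, hps⟩ := Set.not_subset.mp hsub
    refine ⟨fun a ha => ?_, fun a ha hna => h'.2 a (h.1 ha) hna⟩
    by_contra hna
    have h1 := h.2 a (h'.1 ha) hna p hp
    have h2 := h'.2 p (h.1 hp) hps a ha
    exact absurd h1 (not_lt.mpr h2.le)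

open Classical in
/-- the characteristic function of the closed initial segment -/
noncomputable def PT (t : WOQ) : TreeSpace WOQ :=
  ⟨fun s => decide (s ≤ t), by
    refine ⟨fun a ha b hb _ => ?_, fun a b hab hb => ?_⟩
    · exact WOQ_total_below (of_decide_eq_true ha) (of_decide_eq_true hb)
    · exact decide_eq_true (hab.trans (of_decide_eq_true hb))⟩

open Classical in
/-- the characteristic function of the open initial segment -/
noncomputable def QT (t : WOQ) : TreeSpace WOQ :=
  ⟨fun s => decide (s < t), by
    refine ⟨fun a ha b hb _ => ?_, fun a b hab hb => ?_⟩
    · exact WOQ_total_below (of_decide_eq_true ha : a < t).le (of_decide_eq_true hb : b < t).le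
    · exact decide_eq_true (hab.trans_lt (of_decide_eq_true hb))⟩

lemma PT_iff (t s : WOQ) : (PT t).1 s = true ↔ s ≤ t := by simp [PT]

lemma QT_iff (t s : WOQ) : (QT t).1 s = true ↔ s < t := by simp [QT]

/-- the clopen set of chains through `t` -/
def cone (t : WOQ) : Set (TreeSpace WOQ) := {x | x.1 t = true}

lemma cone_isClopen (t : WOQ) : IsClopen (cone t) := by
  have : Continuous (fun x : TreeSpace WOQ => x.1 t) :=
    (continuous_apply t).comp continuous_subtype_val
  exact (isClopen_discrete {true}).preimage this

lemma PT_mem_cone (t s : WOQ) : PT t ∈ cone s ↔ s ≤ t := PT_iff t s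

lemma cone_injective : Function.Injective cone := by
  intro s t h
  have h1 : PT s ∈ cone t := h ▸ (PT_mem_cone s s).2 le_rfl
  have h2 : PT t ∈ cone s := h ▸ (PT_mem_cone t t).2 le_rfl
  exact le_antisymm ((PT_mem_cone _ _).1 h2) ((PT_mem_cone _ _).1 h1)

open Classical in
/-- the point of `KK` corresponding to `t` -/
noncomputable def PK (t : WOQ) : KK :=
  ⟨fun s => if s ≤ t then 1 else 0, by
    refine ⟨fun s => ?_, fun s s' hs => ?_, fun s s' h1 h2 => ?_⟩
    · by_cases h : s ≤ t <;> simp [h]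
    · by_cases h : s' ≤ t
      · right; simp [hs.le.trans h]
      · left; simp [h]
    · by_cases h : s ≤ t
      · right
        have : ¬ s' ≤ t := fun h' => by
          rcases WOQ_total_below h h' with h3 | h3
          · exact h1 h3
          · exact h2 h3
        simp [this]
      · left; simp [h]⟩

/-- the pseudoclopens -/
def pcl (a : Set (TreeSpace WOQ)) : Set KK × Set KK :=
  ({f | ∀ t, a = cone t → f.1 t = 1}, {f | ∃ t, a = cone t ∧ f.1 t ≠ 0})

lemma pcl_fst (t : WOQ) (f : KK) : f ∈ (pcl (cone t)).1 ↔ f.1 t = 1 := by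
  constructor
  · intro h; exact h t rfl
  · intro h s hs; rw [← cone_injective hs]; exact h

lemma pcl_snd (t : WOQ) (f : KK) : f ∈ (pcl (cone t)).2 ↔ f.1 t ≠ 0 := by
  constructor
  · rintro ⟨s, hs, h⟩; rw [cone_injective hs]; exact h
  · intro h; exact ⟨t, rfl, h⟩

lemma exists_greatest_chain (F : Set WOQ) (hF : F.Finite) (hne : F.Nonempty)
    (hc : IsChain (· ≤ ·) F) : ∃ t ∈ F, ∀ s ∈ F, s ≤ t := by
  obtain ⟨t, ht⟩ := hF.exists_maximal hne
  refine ⟨t, ht.1, fun s hs => ?_⟩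
  rcases hc.total hs ht.1 with h | h
  · exact h
  · exact ht.2 hs h

lemma part_one : ∃ (K : Type) (_ : TopologicalSpace K) (_ : CompactSpace K) (_ : T2Space K)
       (_ : PathConnectedSpace K), IsBooleanImage ↥(TreeSpace WOQ) K := by
  refine ⟨KK, inferInstance, isCompact_iff_compactSpace.mp KK_isCompact, inferInstance,
    ⟨⟨⟨_, KK_zero⟩⟩, fun x y => (KK_joined x).symm.trans (KK_joined y)⟩, ?_⟩
  refine ⟨Set.range cone, pcl, ?_, ?_, ?_, ?_, ?_⟩
  · rintro _ ⟨t, rfl⟩; exact cone_isClopen t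
  · intro x y hxy
    have : ∃ t, x.1 t ≠ y.1 t := by
      by_contra h
      push Not at h
      exact hxy (Subtype.ext (funext h))
    obtain ⟨t, ht⟩ := this
    refine ⟨cone t, ⟨t, rfl⟩, ?_⟩
    simp only [cone, Set.mem_ofPred_eq]
    revert ht
    cases x.1 t <;> cases y.1 t <;> simp
  · rintro _ ⟨s, rfl⟩ _ ⟨t, rfl⟩ h
    have hk : ∀ a b, PK a ∈ (pcl (cone b)).1 ↔ b ≤ a := by
      intro a b; rw [pcl_fst]; simp [PK]
    have h1 : PK s ∈ (pcl (cone t)).1 := h ▸ (hk s s).2 le_rfl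
    have h2 : PK t ∈ (pcl (cone s)).1 := h ▸ (hk t t).2 le_rfl
    rw [le_antisymm ((hk _ _).1 h2) ((hk _ _).1 h1)]
  · rintro _ ⟨t, rfl⟩
    have hc : Continuous (fun f : KK => f.1 t) :=
      (continuous_apply t).comp continuous_subtype_val
    refine ⟨?_, ?_, ?_⟩
    · have : (pcl (cone t)).1 = {f : KK | f.1 t = 1} := by ext f; exact pcl_fst t f
      rw [this]; exact isClosed_eq hc continuous_const
    · have : (pcl (cone t)).2 = {f : KK | f.1 t ≠ 0} := by ext f; exact pcl_snd t f
      rw [this]; exact isOpen_ne_fun hc continuous_const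
    · intro f hf
      rw [pcl_fst] at hf
      rw [pcl_snd, hf]; exact one_ne_zero
  · intro F H hF hH hFG hHG hdis
    set F' := cone ⁻¹' F with hF'
    have hF'f : F'.Finite := hF.preimage cone_injective.injOn
    constructor
    · intro hemp
      rw [Set.eq_empty_iff_forall_notMem] at hemp ⊢
      rintro f ⟨hf1, hf2⟩
      simp only [Set.mem_iInter] at hf1
      simp only [Set.mem_iUnion, not_exists] at hf2
      have hf1' : ∀ t ∈ F', f.1 t ≠ 0 := fun t ht => (pcl_snd t f).1 (hf1 _ ht)
      have hf2' : ∀ t, cone t ∈ H → f.1 t ≠ 1 := fun t ht h => hf2 _ ht ((pcl_fst t f).2 h)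
      have hchain : IsChain (· ≤ ·) F' := by
        intro s hs t ht _
        by_contra hcon
        push Not at hcon
        rcases f.2.2.2 s t hcon.1 hcon.2 with h | h
        · exact hf1' s hs h
        · exact hf1' t ht h
      rcases F'.eq_empty_or_nonempty with he | hne
      · refine hemp ⟨fun _ => false, ⟨fun a ha => by simp at ha, fun s t _ h => by simp at h⟩⟩ ⟨?_, ?_⟩
        · intro a ha
          obtain ⟨t, rfl⟩ := hFG ha
          exact absurd (show t ∈ F' from ha) (by simp [he])
        · rintro ⟨a, ha, hx⟩
          obtain ⟨t, rfl⟩ := hHG ha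
          simp [cone] at hx
      · obtain ⟨t, ht, htm⟩ := exists_greatest_chain F' hF'f hne hchain
        refine hemp (PT t) ⟨?_, ?_⟩
        · intro a ha
          obtain ⟨s, rfl⟩ := hFG ha
          exact (PT_mem_cone _ _).2 (htm s ha)
        · rintro ⟨a, ha, hx⟩
          obtain ⟨s, rfl⟩ := hHG ha
          rw [PT_mem_cone] at hx
          rcases hx.lt_or_eq with h | h
          · rcases f.2.2.1 s t h with h1 | h1
            · exact hf1' t ht h1
            · exact hf2' s ha h1
          · subst h
            exact Set.disjoint_left.mp hdis ht ha
    · intro hemp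
      rw [Set.eq_empty_iff_forall_notMem] at hemp ⊢
      rintro x ⟨hx1, hx2⟩
      have hx1' : ∀ t ∈ F', x.1 t = true := fun t ht => hx1 _ ht
      have hx2' : ∀ t, cone t ∈ H → ¬ x.1 t = true := fun t ht h => hx2 ⟨_, ht, h⟩
      have hchain : IsChain (· ≤ ·) F' := fun s hs t ht hne => x.2.1 (hx1' s hs) (hx1' t ht) hne
      rcases F'.eq_empty_or_nonempty with he | hne
      · refine hemp ⟨_, KK_zero⟩ ⟨?_, ?_⟩
        · simp only [Set.mem_iInter]
          intro a ha
          obtain ⟨t, rfl⟩ := hFG ha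
          exact absurd (show t ∈ F' from ha) (by simp [he])
        · simp only [Set.mem_iUnion, not_exists]
          intro a ha
          obtain ⟨t, rfl⟩ := hHG ha
          rw [pcl_snd]
          simp
      · obtain ⟨t, ht, htm⟩ := exists_greatest_chain F' hF'f hne hchain
        refine hemp (PK t) ⟨?_, ?_⟩
        · simp only [Set.mem_iInter]
          intro a ha
          obtain ⟨s, rfl⟩ := hFG ha
          rw [pcl_fst]
          simp [PK, htm s ha]
        · simp only [Set.mem_iUnion, not_exists]
          intro a ha
          obtain ⟨s, rfl⟩ := hHG ha
          rw [pcl_snd]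
          have : ¬ s ≤ t := fun h => hx2' s ha (x.2.2 s t h (hx1' t ht))
          simp [PK, this]

/-! ### Part two: combinatorics of the tree -/

lemma chainUnion (S : Set WOQ) (hS : IsChain (· ≤ ·) S) :
    ∃ u : WOQ, u.1 = (⋃ s ∈ S, s.1) ∧ ∀ s ∈ S, s ≤ u := by
  have key : ∀ s ∈ S, ∀ a ∈ (⋃ s ∈ S, s.1), a ∉ s.1 → ∀ b ∈ s.1, b < a := by
    intro s hs a ha hna b hb
    simp only [Set.mem_iUnion] at ha
    obtain ⟨s', hs', ha⟩ := ha
    rcases hS.total hs hs' with h | h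
    · exact h.2 a ha hna b hb
    · exact absurd (h.1 ha) hna
  have hwf : (⋃ s ∈ S, s.1).IsWF := by
    rw [Set.isWF_iff_no_descending_seq]
    intro f hf hmem
    have h0 := hmem 0
    simp only [Set.mem_iUnion] at h0
    obtain ⟨s, hs, h0⟩ := h0
    refine (Set.isWF_iff_no_descending_seq.mp s.2) f hf (fun n => ?_)
    by_contra hn
    have h1 := key s hs (f n) (hmem n) hn _ h0
    have h2 : f n ≤ f 0 := hf.antitone (Nat.zero_le n)
    exact absurd h1 (not_lt.mpr h2)
  exact ⟨⟨_, hwf⟩, rfl, fun s hs => ⟨Set.subset_biUnion_of_mem (u := fun s : WOQ => s.1) hs, key s hs⟩⟩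

/-- `t` is bounded strictly below `q` -/
def Bd (q : ℚ) (t : WOQ) : Prop := ∃ p < q, ∀ x ∈ t.1, x < p

/-- adding a point to a node -/
def addPt (t : WOQ) (r : ℚ) : WOQ := ⟨insert r t.1, t.2.insert r⟩

lemma lt_addPt {t : WOQ} {r : ℚ} (h : ∀ x ∈ t.1, x < r) : t < addPt t r := by
  refine lt_of_le_of_ne ⟨Set.subset_insert _ _, ?_⟩ ?_
  · intro a ha hna b hb
    rcases ha with rfl | ha
    · exact h b hb
    · exact absurd ha hna
  · intro he
    have : r ∈ t.1 := by rw [he]; exact Set.mem_insert _ _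
    exact lt_irrefl _ (h r this)

lemma addPt_unique {t s : WOQ} {r r' : ℚ} (h : ∀ x ∈ t.1, x < r) (h' : ∀ x ∈ t.1, x < r')
    (h1 : addPt t r ≤ s) (h2 : addPt t r' ≤ s) : r = r' := by
  by_contra hne
  have hr : r ∈ s.1 := h1.1 (Set.mem_insert _ _)
  have hr' : r' ∈ s.1 := h2.1 (Set.mem_insert _ _)
  have a1 : r ∉ (addPt t r').1 := by
    rintro (h3 | h3)
    · exact hne h3
    · exact lt_irrefl _ (h r h3)
  have a2 : r' ∉ (addPt t r).1 := by
    rintro (h3 | h3)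
    · exact hne h3.symm
    · exact lt_irrefl _ (h' r' h3)
  have b1 := h2.2 r hr a1 r' (Set.mem_insert _ _)
  have b2 := h1.2 r' hr' a2 r (Set.mem_insert _ _)
  exact absurd b1 (not_lt.mpr b2.le)

lemma addPt_Bd {t : WOQ} {r q : ℚ} (h : ∀ x ∈ t.1, x < r) (hr : r < q) : Bd q (addPt t r) := by
  obtain ⟨m, hm1, hm2⟩ := exists_between hr
  refine ⟨m, hm2, ?_⟩
  rintro x (rfl | hx)
  · exact hm1
  · exact (h x hx).trans hm1

lemma baire_tree {C : Type*} [Countable C] [Nonempty C] (col : C → WOQ → Prop)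
    (hcol : ∀ t : WOQ, t.1.Nonempty → ∃ c, col c t) :
    ∃ c t0 q0, Bd q0 t0 ∧ ∀ t, t0 ≤ t → Bd q0 t → ∃ s, t ≤ s ∧ Bd q0 s ∧ col c s := by
  by_contra hcon
  push Not at hcon
  obtain ⟨e, he⟩ := exists_surjective_nat C
  have step : ∀ (n : ℕ) (p : {p : WOQ × ℚ // Bd p.2 p.1}), ∃ p' : {p : WOQ × ℚ // Bd p.2 p.1},
      p.1.1 ≤ p'.1.1 ∧ p'.1.2 < p.1.2 ∧
      ∀ s, p'.1.1 ≤ s → Bd p.1.2 s → ¬ col (e n) s := by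
    rintro n ⟨⟨t, q⟩, hb⟩
    obtain ⟨t', h1, ⟨p, hp, hp'⟩, h3⟩ := hcon (e n) t q hb
    obtain ⟨q', hq1, hq2⟩ := exists_between hp
    exact ⟨⟨⟨t', q'⟩, ⟨p, hq1, hp'⟩⟩, h1, hq2, h3⟩
  choose f hf1 hf2 hf3 using step
  let t00 : WOQ := ⟨{0}, Set.isWF_singleton⟩
  have hb0 : Bd 2 t00 := ⟨1, by norm_num, by
    intro x hx
    have : x = 0 := hx
    rw [this]; norm_num⟩
  let g : ℕ → {p : WOQ × ℚ // Bd p.2 p.1} := fun n =>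
    Nat.rec ⟨⟨t00, 2⟩, hb0⟩ (fun n p => f n p) n
  have hg : ∀ n, g (n+1) = f n (g n) := fun n => rfl
  have hmono : Monotone (fun n => (g n).1.1) := monotone_nat_of_le_succ fun n => by
    simp only [hg]; exact hf1 n (g n)
  have hanti : Antitone (fun n => (g n).1.2) := antitone_nat_of_succ_le fun n => by
    simp only [hg]; exact (hf2 n (g n)).le
  obtain ⟨u, hu, hle⟩ := chainUnion (Set.range fun n => (g n).1.1) hmono.isChain_range
  have hle' : ∀ n, (g n).1.1 ≤ u := fun n => hle _ ⟨n, rfl⟩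
  have hne : u.1.Nonempty := ⟨0, (hle' 0).1 (show (0:ℚ) ∈ t00.1 from rfl)⟩
  obtain ⟨c, hc⟩ := hcol u hne
  obtain ⟨n, rfl⟩ := he c
  have h3 := hf3 n (g n) u (hle' (n+1))
  refine h3 ⟨(g (n+1)).1.2, hf2 n (g n), ?_⟩ hc
  intro x hx
  rw [hu] at hx
  simp only [Set.mem_iUnion, Set.mem_range] at hx
  obtain ⟨_, ⟨m, rfl⟩, hx⟩ := hx
  set N := max m (n+1)
  have hxN : x ∈ (g N).1.1.1 := (hmono (le_max_left m (n+1))).1 hx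
  obtain ⟨p, hp, hp'⟩ := (g N).2
  exact (hp' x hxN).trans (hp.trans_le (hanti (le_max_right m (n+1))))

lemma nbhd_tree {O : Set (TreeSpace WOQ)} (hO : IsOpen O) {x : TreeSpace WOQ} (hx : x ∈ O) :
    ∃ I : Finset WOQ, ∀ y : TreeSpace WOQ, (∀ i ∈ I, y.1 i = x.1 i) → y ∈ O := by
  obtain ⟨O', hO', rfl⟩ := isOpen_induced_iff.mp hO
  obtain ⟨I, u, h1, h2⟩ := isOpen_pi_iff.mp hO' x.1 hx
  refine ⟨I, fun y hy => h2 ?_⟩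
  intro i hi
  rw [hy i hi]
  exact (h1 i hi).2

lemma step_tree {O : Set (TreeSpace WOQ)} (hO : IsOpen O) {t : WOQ} (ht : PT t ∈ O) {q : ℚ}
    (hb : Bd q t) : ∃ t', t < t' ∧ Bd q t' ∧ cone t' ⊆ O := by
  obtain ⟨I, hI⟩ := nbhd_tree hO ht
  obtain ⟨p, hp, hp'⟩ := hb
  have hr : ∃ r ∈ Set.Ioo p q, ∀ s ∈ I, ¬ addPt t r ≤ s := by
    by_contra hcon
    push Not at hcon
    have : Nonempty WOQ := ⟨t⟩
    choose! F hF1 hF2 using hcon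
    obtain ⟨r, hr, r', hr', hne, heq⟩ := (Set.Ioo_infinite hp).exists_ne_map_eq_of_mapsTo
      (f := F) (t := (I : Set WOQ)) (fun r hr => hF1 r hr) I.finite_toSet
    exact hne (addPt_unique (fun x hx => (hp' x hx).trans hr.1) (fun x hx => (hp' x hx).trans hr'.1)
      (hF2 r hr) (heq ▸ hF2 r' hr'))
  obtain ⟨r, hr, hrI⟩ := hr
  have hlt : ∀ x ∈ t.1, x < r := fun x hx => (hp' x hx).trans hr.1
  refine ⟨addPt t r, lt_addPt hlt, addPt_Bd hlt hr.2, fun x hx => hI x fun s hs => ?_⟩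
  rw [Bool.eq_iff_iff, PT_iff]
  constructor
  · intro hxs
    have hcmp : s ≤ addPt t r ∨ addPt t r ≤ s := x.2.1.total hxs hx
    rcases hcmp with h | h
    · have h2 : r ∉ s.1 := by
        intro hrs
        apply hrI s hs
        have hsub : (addPt t r).1 ⊆ s.1 := by
          rintro y (rfl | hy)
          · exact hrs
          · by_contra hys
            have := h.2 y ((lt_addPt hlt).le.1 hy) hys r hrs
            exact absurd (hlt y hy) (not_lt.mpr this.le)
        exact ⟨hsub, fun a ha hna => absurd (h.1 ha) hna⟩
      refine ⟨fun y hy => ?_, fun a ha hna b hb => h.2 a ((lt_addPt hlt).le.1 ha) hna b hb⟩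
      rcases h.1 hy with rfl | h3
      · exact absurd hy h2
      · exact h3
    · exact absurd h (hrI s hs)
  · intro hst
    exact x.2.2 s (addPt t r) (hst.trans (lt_addPt hlt).le) hx

/-- initial segment up to `q` -/
def restr (t : WOQ) (q : ℚ) : WOQ := ⟨{x ∈ t.1 | x ≤ q}, t.2.mono fun _ h => h.1⟩

lemma restr_le (t : WOQ) (q : ℚ) : restr t q ≤ t := by
  refine ⟨fun _ h => h.1, fun a ha hna b hb => ?_⟩
  by_contra h
  exact hna ⟨ha, (not_lt.mp h).trans hb.2⟩

lemma restr_mono (t : WOQ) {q q' : ℚ} (h : q ≤ q') : restr t q ≤ restr t q' := by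
  refine ⟨fun _ hx => ⟨hx.1, hx.2.trans h⟩, fun a ha hna b hb => ?_⟩
  by_contra h
  exact hna ⟨ha.1, (not_lt.mp h).trans hb.2⟩

lemma restr_eq {t s : WOQ} (h : t ≤ s) {q : ℚ} (hq : q ∈ t.1) : restr s q = restr t q := by
  apply Subtype.ext
  ext x
  constructor
  · rintro ⟨h1, h2⟩
    refine ⟨?_, h2⟩
    by_contra hx
    exact absurd (h.2 x h1 hx q hq) (not_lt.mpr h2)
  · rintro ⟨h1, h2⟩
    exact ⟨h.1 h1, h2⟩

lemma cone_anti {s t : WOQ} (h : s ≤ t) : cone t ⊆ cone s := fun x hx => x.2.2 s t h hx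

lemma regress_one (t : WOQ) (hne : t.1.Nonempty) (s : WOQ) :
    ∃ q ∈ t.1, ∀ x : TreeSpace WOQ, x ∈ cone (restr t q) → x ∉ cone t → x.1 s = (QT t).1 s := by
  by_cases h1 : s < t
  · have : ∃ q ∈ t.1, q ∉ s.1 := by
      by_contra hcon
      push Not at hcon
      exact h1.ne (le_antisymm h1.le ⟨hcon, fun a ha hna => absurd (h1.le.1 ha) hna⟩)
    obtain ⟨q, hq, hqs⟩ := this
    refine ⟨q, hq, fun x hx _ => ?_⟩
    rw [(QT_iff t s).2 h1]
    refine x.2.2 s (restr t q) ⟨fun y hy => ⟨h1.le.1 hy, (h1.le.2 q hq hqs y hy).le⟩, ?_⟩ hx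
    intro a ha hna b hb
    exact h1.le.2 a ha.1 hna b hb
  · have hQ : (QT t).1 s = false := by
      rw [← Bool.not_eq_true, QT_iff]; exact h1
    by_cases h2 : t ≤ s
    · obtain ⟨q, hq⟩ := hne
      refine ⟨q, hq, fun x _ hx => ?_⟩
      rw [hQ, ← Bool.not_eq_true]
      exact fun hxs => hx (x.2.2 t s h2 hxs)
    · have : ∃ q ∈ t.1, ¬ restr t q ≤ s := by
        by_contra hcon
        push Not at hcon
        apply h2
        refine ⟨fun q hq => (hcon q hq).1 ⟨hq, le_rfl⟩, fun a ha hna b hb => ?_⟩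
        exact (hcon b hb).2 a ha (fun h => hna h.1) b ⟨hb, le_rfl⟩
      obtain ⟨q, hq, hqs⟩ := this
      refine ⟨q, hq, fun x hx hxt => ?_⟩
      rw [hQ, ← Bool.not_eq_true]
      intro hxs
      have hcmp : s ≤ restr t q ∨ restr t q ≤ s := x.2.1.total hxs hx
      rcases hcmp with h | h
      · have h3 := h.trans (restr_le t q)
        rcases h3.lt_or_eq with h4 | h4
        · exact h1 h4
        · exact h2 h4.ge
      · exact hqs h

lemma regress {O : Set (TreeSpace WOQ)} (hO : IsOpen O) (t : WOQ) (hne : t.1.Nonempty)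
    (ht : QT t ∈ O) :
    ∃ q ∈ t.1, ∀ x : TreeSpace WOQ, x ∈ cone (restr t q) → x ∉ cone t → x ∈ O := by
  obtain ⟨I, hI⟩ := nbhd_tree hO ht
  have : ∃ q ∈ t.1, ∀ s ∈ I, ∀ x : TreeSpace WOQ, x ∈ cone (restr t q) → x ∉ cone t →
      x.1 s = (QT t).1 s := by
    classical
    clear hI
    induction I using Finset.induction_on with
    | empty => obtain ⟨q, hq⟩ := hne; exact ⟨q, hq, by simp⟩
    | insert a I _ ih =>
      obtain ⟨q, hq, h⟩ := ih
      obtain ⟨q', hq', h'⟩ := regress_one t hne a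
      refine ⟨max q q', by rcases max_choice q q' with h | h <;> rw [h] <;> assumption, ?_⟩
      intro s hs x hx hxt
      rcases Finset.mem_insert.mp hs with rfl | hs
      · exact h' x (cone_anti (restr_mono t (le_max_right _ _)) hx) hxt
      · exact h s hs x (cone_anti (restr_mono t (le_max_left _ _)) hx) hxt
  obtain ⟨q, hq, h⟩ := this
  exact ⟨q, hq, fun x hx hxt => hI x fun s hs => h s hs x hx hxt⟩

lemma tree_compact : CompactSpace (TreeSpace WOQ) := by
  rw [← isCompact_iff_compactSpace]
  apply IsClosed.isCompact
  have e : ∀ (t : WOQ) (c : Bool), IsClosed {x : WOQ → Bool | x t = c} := fun t c =>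
    isClosed_eq (continuous_apply t) continuous_const
  have hK : TreeSpace WOQ =
      (⋂ s, ⋂ t, ⋂ (_ : ¬ s ≤ t), ⋂ (_ : ¬ t ≤ s),
        ({x : WOQ → Bool | x s = false} ∪ {x : WOQ → Bool | x t = false})) ∩
      (⋂ s, ⋂ t, ⋂ (_ : s ≤ t), ({x : WOQ → Bool | x t = false} ∪ {x : WOQ → Bool | x s = true})) := by
    ext x
    simp only [Set.mem_inter_iff, Set.mem_iInter, Set.mem_union]
    constructor
    · rintro ⟨h1, h2⟩
      refine ⟨fun s t hst hts => ?_, fun s t hst => ?_⟩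
      · by_contra hcon
        push Not at hcon
        have a1 : x s = true := by simpa using hcon.1
        have a2 : x t = true := by simpa using hcon.2
        rcases h1.total (show s ∈ {t | x t = true} from a1) (show t ∈ {t | x t = true} from a2) with h | h
        · exact hst h
        · exact hts h
      · cases hx : x t
        · exact Or.inl hx
        · exact Or.inr (h2 s t hst hx)
    · rintro ⟨h1, h2⟩
      refine ⟨fun s hs t ht _ => ?_, fun s t hst hx => ?_⟩
      · by_contra hcon
        push Not at hcon
        have hs' : x s = true := hs
        have ht' : x t = true := ht
        rcases h1 s t hcon.1 hcon.2 with h | h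
        · have h' : x s = false := h
          simp [hs'] at h'
        · have h' : x t = false := h
          simp [ht'] at h'
      · rcases h2 s t hst with h | h
        · have h' : x t = false := h
          simp [hx] at h'
        · exact h
  rw [hK]
  refine IsClosed.inter ?_ ?_
  · exact isClosed_iInter fun s => isClosed_iInter fun t => isClosed_iInter fun _ =>
      isClosed_iInter fun _ => (e s _).union (e t _)
  · exact isClosed_iInter fun s => isClosed_iInter fun t => isClosed_iInter fun _ =>
      (e t _).union (e s _)

lemma finite_nbhd {X : Type*} [TopologicalSpace X] [CompactSpace X] (𝒢 : Set (Set X))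
    (hcl : ∀ a ∈ 𝒢, IsClopen a) (hsep : SeparatesPoints' 𝒢) {O : Set X} (hO : IsOpen O)
    {x : X} (hx : x ∈ O) :
    ∃ Φ : Set (Set X), Φ.Finite ∧ Φ ⊆ 𝒢 ∧ ∀ y, (∀ a ∈ Φ, (y ∈ a ↔ x ∈ a)) → y ∈ O := by
  have hc : IsCompact Oᶜ := hO.isClosed_compl.isCompact
  obtain ⟨u, hu⟩ := hc.elim_finite_subfamily_closed (fun a : 𝒢 => {y | y ∈ a.1 ↔ x ∈ a.1})
    (fun a => by
      by_cases h : x ∈ a.1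
      · have : {y | y ∈ a.1 ↔ x ∈ a.1} = a.1 := by ext y; simp [h]
        rw [this]; exact (hcl _ a.2).1
      · have : {y | y ∈ a.1 ↔ x ∈ a.1} = a.1ᶜ := by ext y; simp [h]
        rw [this]; exact (hcl _ a.2).compl.1)
    (by
      rw [Set.eq_empty_iff_forall_notMem]
      rintro y ⟨hy1, hy2⟩
      have hne : x ≠ y := fun h => hy1 (h ▸ hx)
      obtain ⟨a, ha, h⟩ := hsep x y hne
      have h3 : y ∈ a ↔ x ∈ a := Set.mem_iInter.mp hy2 ⟨a, ha⟩
      tauto)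
  refine ⟨Set.image (fun a : 𝒢 => a.1) (u : Set 𝒢), u.finite_toSet.image _, ?_, ?_⟩
  · rintro _ ⟨a, _, rfl⟩; exact a.2
  · intro y hy
    by_contra hyO
    rw [Set.eq_empty_iff_forall_notMem] at hu
    refine hu y ⟨hyO, ?_⟩
    simp only [Set.mem_iInter]
    intro a ha
    exact hy a.1 ⟨a, ha, rfl⟩
/-! ### Part two: literals and convexity -/

/-- a literal: `a` or its complement -/
def lit {X : Type*} : Bool → Set X → Set X
  | true, a => a
  | false, a => aᶜ

/-- closed part of the pseudoclopen of a literal -/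
def loL {X K : Type*} (φ : Set X → Set K × Set K) : Bool → Set X → Set K
  | true, a => (φ a).1
  | false, a => ((φ a).2)ᶜ

/-- open part of the pseudoclopen of a literal -/
def hiL {X K : Type*} (φ : Set X → Set K × Set K) : Bool → Set X → Set K
  | true, a => (φ a).2
  | false, a => ((φ a).1)ᶜ

lemma lit_not {X : Type*} (s : Bool) (a : Set X) (x : X) : x ∈ lit (!s) a ↔ x ∉ lit s a := by
  cases s <;> simp [lit]

lemma lo_of_not_hi {X K : Type*} (φ : Set X → Set K × Set K) (s : Bool) (a : Set X) (k : K) :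
    k ∉ hiL φ (!s) a ↔ k ∈ loL φ s a := by
  cases s <;> simp [loL, hiL]

lemma lit_clopen {X : Type*} [TopologicalSpace X] {a : Set X} (h : IsClopen a) (s : Bool) :
    IsClopen (lit s a) := by
  cases s
  · exact h.compl
  · exact h

section iso
variable {X K : Type*} [TopologicalSpace K] {𝒢 : Set (Set X)} {φ : Set X → Set K × Set K}

lemma loL_closed (h : IsPseudoclopenIso 𝒢 φ) {a : Set X} (ha : a ∈ 𝒢) (s : Bool) :
    IsClosed (loL φ s a) := by
  cases s
  · exact (h.2.1 a ha).2.1.isClosed_compl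
  · exact (h.2.1 a ha).1

lemma hiL_open (h : IsPseudoclopenIso 𝒢 φ) {a : Set X} (ha : a ∈ 𝒢) (s : Bool) :
    IsOpen (hiL φ s a) := by
  cases s
  · exact (h.2.1 a ha).1.isOpen_compl
  · exact (h.2.1 a ha).2.1

lemma loL_sub_hiL (h : IsPseudoclopenIso 𝒢 φ) {a : Set X} (ha : a ∈ 𝒢) (s : Bool) :
    loL φ s a ⊆ hiL φ s a := by
  cases s
  · exact Set.compl_subset_compl.mpr (h.2.1 a ha).2.2
  · exact (h.2.1 a ha).2.2

lemma iso_lit (h : IsPseudoclopenIso 𝒢 φ) (Φ : Set (Set X)) (hf : Φ.Finite) (hΦ : Φ ⊆ 𝒢)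
    (σ : Set X → Bool) :
    ((∀ x, ¬ ∀ a ∈ Φ, x ∈ lit (σ a) a) → ∀ k, ¬ ∀ a ∈ Φ, k ∈ hiL φ (σ a) a) ∧
    ((∀ k, ¬ ∀ a ∈ Φ, k ∈ loL φ (σ a) a) → ∀ x, ¬ ∀ a ∈ Φ, x ∈ lit (σ a) a) := by
  have hh := h.2.2 {a ∈ Φ | σ a = true} {a ∈ Φ | σ a = false}
    (hf.subset fun _ h => h.1) (hf.subset fun _ h => h.1) (fun _ h => hΦ h.1) (fun _ h => hΦ h.1)
    (by
      rw [Set.disjoint_left]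
      rintro a ⟨_, h1⟩ ⟨_, h2⟩
      rw [h1] at h2; exact absurd h2 (by simp))
  have e1 : ∀ x, (x ∈ ⋂₀ {a ∈ Φ | σ a = true} \ ⋃₀ {a ∈ Φ | σ a = false}) ↔
      ∀ a ∈ Φ, x ∈ lit (σ a) a := by
    intro x
    constructor
    · rintro ⟨h1, h2⟩ a ha
      cases hs : σ a
      · exact fun hx => h2 ⟨a, ⟨ha, hs⟩, hx⟩
      · exact h1 a ⟨ha, hs⟩
    · intro hx
      refine ⟨fun a ha => ?_, ?_⟩
      · have := hx a ha.1
        rw [ha.2] at this; exact this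
      · rintro ⟨a, ha, hxa⟩
        have := hx a ha.1
        rw [ha.2] at this; exact this hxa
  have e2 : ∀ k, (k ∈ (⋂ a ∈ {a ∈ Φ | σ a = true}, (φ a).2) \
      ⋃ a ∈ {a ∈ Φ | σ a = false}, (φ a).1) ↔ ∀ a ∈ Φ, k ∈ hiL φ (σ a) a := by
    intro x
    simp only [Set.mem_sdiff, Set.mem_iInter, Set.mem_iUnion, not_exists]
    constructor
    · rintro ⟨h1, h2⟩ a ha
      cases hs : σ a
      · exact fun hx => h2 a ⟨ha, hs⟩ hx
      · exact h1 a ⟨ha, hs⟩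
    · intro hx
      refine ⟨fun a ha => ?_, ?_⟩
      · have := hx a ha.1
        rw [ha.2] at this; exact this
      · intro a ha hxa
        have := hx a ha.1
        rw [ha.2] at this; exact this hxa
  have e3 : ∀ k, (k ∈ (⋂ a ∈ {a ∈ Φ | σ a = true}, (φ a).1) \
      ⋃ a ∈ {a ∈ Φ | σ a = false}, (φ a).2) ↔ ∀ a ∈ Φ, k ∈ loL φ (σ a) a := by
    intro x
    simp only [Set.mem_sdiff, Set.mem_iInter, Set.mem_iUnion, not_exists]
    constructor
    · rintro ⟨h1, h2⟩ a ha
      cases hs : σ a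
      · exact fun hx => h2 a ⟨ha, hs⟩ hx
      · exact h1 a ⟨ha, hs⟩
    · intro hx
      refine ⟨fun a ha => ?_, ?_⟩
      · have := hx a ha.1
        rw [ha.2] at this; exact this
      · intro a ha hxa
        have := hx a ha.1
        rw [ha.2] at this; exact this hxa
  simp only [Set.eq_empty_iff_forall_notMem] at hh
  refine ⟨fun hx k => ?_, fun hk x => ?_⟩
  · rw [← e2]
    exact hh.1 (fun x hx' => hx x ((e1 x).1 hx')) k
  · rw [← e1]
    exact hh.2 (fun k hk' => hk k ((e3 k).1 hk')) x

lemma iso_two (h : IsPseudoclopenIso 𝒢 φ) (Φ : Set (Set X)) (hf : Φ.Finite) (hΦ : Φ ⊆ 𝒢)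
    (σ : Set X → Bool) {a b : Set X} (ha : a ∈ 𝒢) (hb : b ∈ 𝒢) (ha' : a ∉ Φ) (hb' : b ∉ Φ)
    (hab : a ≠ b) (sa sb : Bool)
    (hx : ∀ x, (∀ c ∈ Φ, x ∈ lit (σ c) c) → x ∈ lit sa a → x ∈ lit sb b → False) (k : K)
    (hk : ∀ c ∈ Φ, k ∈ hiL φ (σ c) c) (hka : k ∈ hiL φ sa a) (hkb : k ∈ hiL φ sb b) : False := by
  classical
  set σ' : Set X → Bool := Function.update (Function.update σ a sa) b sb with hσ'
  have ea : σ' a = sa := by simp [hσ', hab]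
  have eb : σ' b = sb := by simp [hσ']
  have ec : ∀ c ∈ Φ, σ' c = σ c := by
    intro c hc
    have h1 : c ≠ a := fun h => ha' (h ▸ hc)
    have h2 : c ≠ b := fun h => hb' (h ▸ hc)
    simp [hσ', h1, h2]
  refine (iso_lit h (insert a (insert b Φ)) ((hf.insert b).insert a)
    (Set.insert_subset ha (Set.insert_subset hb hΦ)) σ').1 ?_ k ?_
  · intro x hx'
    refine hx x (fun c hc => ?_) ?_ ?_
    · rw [← ec c hc]; exact hx' c (Or.inr (Or.inr hc))
    · rw [← ea]; exact hx' a (Or.inl rfl)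
    · rw [← eb]; exact hx' b (Or.inr (Or.inl rfl))
  · rintro c (rfl | rfl | hc)
    · rw [ea]; exact hka
    · rw [eb]; exact hkb
    · rw [ec c hc]; exact hk c hc

lemma iso_one (h : IsPseudoclopenIso 𝒢 φ) (Φ : Set (Set X)) (hf : Φ.Finite) (hΦ : Φ ⊆ 𝒢)
    (σ : Set X → Bool) {a : Set X} (ha : a ∈ 𝒢) (ha' : a ∉ Φ) (sa : Bool) (x : X)
    (hx : ∀ c ∈ Φ, x ∈ lit (σ c) c) (hxa : x ∈ lit sa a) :
    ∃ k, (∀ c ∈ Φ, k ∈ loL φ (σ c) c) ∧ k ∈ loL φ sa a := by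
  classical
  set σ' : Set X → Bool := Function.update σ a sa with hσ'
  have ea : σ' a = sa := by simp [hσ']
  have ec : ∀ c ∈ Φ, σ' c = σ c := by
    intro c hc
    have h1 : c ≠ a := fun h => ha' (h ▸ hc)
    simp [hσ', h1]
  by_contra hcon
  push Not at hcon
  refine (iso_lit h (insert a Φ) (hf.insert a) (Set.insert_subset ha hΦ) σ').2 ?_ x ?_
  · intro k hk
    refine hcon k (fun c hc => ?_) ?_
    · rw [← ec c hc]; exact hk c (Or.inr hc)
    · rw [← ea]; exact hk a (Or.inl rfl)
  · rintro c (rfl | hc)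
    · rw [ea]; exact hxa
    · rw [ec c hc]; exact hx c hc

end iso

lemma unif_gap {Γ : Type*} {K : Set (Γ → ℝ)} (hK : IsCompact K) {c o : Set K} (hc : IsClosed c)
    (ho : IsOpen o) (hco : c ⊆ o) :
    ∃ D : Finset Γ, ∃ ε : ℝ, 0 < ε ∧ ∀ x ∈ c, ∀ y : K,
      (∀ γ ∈ D, |x.1 γ - y.1 γ| < ε) → y ∈ o := by
  classical
  have : CompactSpace K := isCompact_iff_compactSpace.mp hK
  have hloc : ∀ x : K, ∃ (D : Finset Γ) (ε : ℝ), 0 < ε ∧ (x ∈ c → ∀ y : K,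
      (∀ γ ∈ D, |x.1 γ - y.1 γ| < 2 * ε) → y ∈ o) := by
    intro x
    by_cases hx : x ∈ c
    · obtain ⟨O', hO', rfl⟩ := isOpen_induced_iff.mp ho
      obtain ⟨I, u, h1, h2⟩ := isOpen_pi_iff.mp hO' x.1 (hco hx)
      have : ∃ ε : ℝ, 0 < ε ∧ ∀ γ ∈ I, ∀ r, |x.1 γ - r| < 2 * ε → r ∈ u γ := by
        clear h2
        induction I using Finset.induction_on with
        | empty => exact ⟨1, one_pos, by simp⟩
        | insert a I _ ih =>
          obtain ⟨ε, hε, h⟩ := ih (fun i hi => h1 i (Finset.mem_insert_of_mem hi))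
          obtain ⟨ho, hm⟩ := h1 a (Finset.mem_insert_self a I)
          obtain ⟨δ, hδ, hb⟩ := Metric.isOpen_iff.mp ho _ hm
          refine ⟨min ε (δ/2), lt_min hε (by linarith), fun γ hγ r hr => ?_⟩
          have m1 := min_le_left ε (δ/2)
          have m2 := min_le_right ε (δ/2)
          rcases Finset.mem_insert.mp hγ with rfl | hγ
          · apply hb
            rw [Metric.mem_ball, dist_comm, Real.dist_eq]
            linarith
          · exact h γ hγ r (by linarith)
      obtain ⟨ε, hε, h⟩ := this
      exact ⟨I, ε, hε, fun _ y hy => h2 fun γ hγ => h γ hγ _ (hy γ hγ)⟩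
    · exact ⟨∅, 1, one_pos, fun h => absurd h hx⟩
  choose D ε hε hD using hloc
  have hopen : ∀ x : K, IsOpen {y : K | ∀ γ ∈ D x, |x.1 γ - y.1 γ| < ε x} := by
    intro x
    have : {y : K | ∀ γ ∈ D x, |x.1 γ - y.1 γ| < ε x} =
        ⋂ γ ∈ D x, {y : K | |x.1 γ - y.1 γ| < ε x} := by ext y; simp
    rw [this]
    refine isOpen_biInter_finset fun γ _ => isOpen_lt ?_ continuous_const
    have : Continuous (fun y : K => y.1 γ) := (continuous_apply γ).comp continuous_subtype_val
    exact (continuous_const.sub this).abs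
  obtain ⟨T, hTc, hT⟩ := hc.isCompact.elim_nhds_subcover
    (fun x => {y : K | ∀ γ ∈ D x, |x.1 γ - y.1 γ| < ε x})
    (fun x _ => (hopen x).mem_nhds (fun γ _ => by simpa using hε x))
  have hmin : ∃ δ : ℝ, 0 < δ ∧ ∀ x ∈ T, δ ≤ ε x := by
    clear hTc hT
    induction T using Finset.induction_on with
    | empty => exact ⟨1, one_pos, by simp⟩
    | insert a I _ ih =>
      obtain ⟨δ, hδ, h⟩ := ih
      refine ⟨min δ (ε a), lt_min hδ (hε a), fun x hx => ?_⟩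
      rcases Finset.mem_insert.mp hx with rfl | hx
      · exact min_le_right _ _
      · exact (min_le_left _ _).trans (h x hx)
  obtain ⟨δ, hδ, hmin⟩ := hmin
  refine ⟨T.biUnion D, δ, hδ, fun x hx y hy => ?_⟩
  obtain ⟨z, hz, hxz⟩ := Set.mem_iUnion₂.mp (hT hx)
  refine hD z (hTc z hz) y (fun γ hγ => ?_)
  have a1 : |z.1 γ - x.1 γ| < ε z := hxz γ hγ
  have a2 := hy γ (Finset.mem_biUnion.mpr ⟨z, hz, hγ⟩)
  have a3 := hmin z hz
  have a4 := abs_sub_le (z.1 γ) (x.1 γ) (y.1 γ)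
  linarith

/-- pigeonhole in a compact set: two members of a sequence are close on finitely many coordinates -/
lemma close_pair {Γ : Type*} {K : Set (Γ → ℝ)} (hK : IsCompact K) (x : ℕ → K) (D : Finset Γ)
    {ε : ℝ} (hε : 0 < ε) : ∃ i j, i ≠ j ∧ ∀ γ ∈ D, |(x i).1 γ - (x j).1 γ| < ε := by
  have : CompactSpace K := isCompact_iff_compactSpace.mp hK
  have hopen : ∀ x : K, IsOpen {y : K | ∀ γ ∈ D, |x.1 γ - y.1 γ| < ε / 2} := by
    intro x
    have : {y : K | ∀ γ ∈ D, |x.1 γ - y.1 γ| < ε / 2} =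
        ⋂ γ ∈ D, {y : K | |x.1 γ - y.1 γ| < ε / 2} := by ext y; simp
    rw [this]
    refine isOpen_biInter_finset fun γ _ => isOpen_lt ?_ continuous_const
    have : Continuous (fun y : K => y.1 γ) := (continuous_apply γ).comp continuous_subtype_val
    exact (continuous_const.sub this).abs
  obtain ⟨T, _, hT⟩ := (isCompact_univ (X := K)).elim_nhds_subcover
    (fun x => {y : K | ∀ γ ∈ D, |x.1 γ - y.1 γ| < ε / 2})
    (fun x _ => (hopen x).mem_nhds (fun γ _ => by simpa using hε))
  have : ∀ i, ∃ z : T, ∀ γ ∈ D, |z.1.1 γ - (x i).1 γ| < ε / 2 := by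
    intro i
    obtain ⟨z, hz, h⟩ := Set.mem_iUnion₂.mp (hT (Set.mem_univ (x i)))
    exact ⟨⟨z, hz⟩, h⟩
  choose f hf using this
  obtain ⟨i, j, hij, h⟩ := Finite.exists_ne_map_eq_of_infinite f
  refine ⟨i, j, hij, fun γ hγ => ?_⟩
  have a1 := hf i γ hγ
  have a2 := hf j γ hγ
  rw [← h] at a2
  have a3 := abs_sub_le ((x i).1 γ) ((f i).1.1 γ) ((x j).1 γ)
  rw [abs_sub_comm ((x i).1 γ) ((f i).1.1 γ)] at a3
  linarith

/-- The convexity argument: going along a segment through a decreasing sequence of pseudoclopens. -/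
lemma segment_lemma {Γ : Type*} {K : Set (Γ → ℝ)}
    (h01 : ∀ x ∈ K, ∀ γ, x γ ∈ Set.Icc (0:ℝ) 1) (hconv : Convex ℝ K) (n : ℕ)
    (W : Set K) (lo hi : ℕ → Set K)
    (hgap : ∀ j, ∀ x ∈ lo j, ∀ y : K, (∀ γ, |x.1 γ - y.1 γ| ≤ 1 / ((n:ℝ) + 1)) → y ∈ hi j)
    (hdec : ∀ j, ∀ y ∈ W, y ∈ hi (j+1) → y ∈ lo j)
    (x z : K) (hx : x ∈ lo (n+1))
    (hW : ∀ y : K, (∃ r ∈ Set.Icc (0:ℝ) 1, ∀ γ, y.1 γ = x.1 γ + r * (z.1 γ - x.1 γ)) → y ∈ W)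
    (w : K) (hw : ∀ γ, w.1 γ = (x.1 γ + z.1 γ) / 2) : w ∈ lo 0 := by
  have hpt : ∀ r : ℝ, r ∈ Set.Icc (0:ℝ) 1 → (fun γ => x.1 γ + r * (z.1 γ - x.1 γ)) ∈ K := by
    intro r hr
    have := hconv x.2 z.2 (a := 1 - r) (b := r) (by linarith [hr.2]) hr.1 (by ring)
    convert this using 1
    funext γ
    simp only [Pi.add_apply, Pi.smul_apply, smul_eq_mul]
    ring
  have hn : (0:ℝ) < (n:ℝ) + 1 := by positivity
  have main : ∀ j ≤ n + 1, ∀ y : K,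
      (∀ γ, y.1 γ = x.1 γ + ((j:ℝ) / (2 * ((n:ℝ) + 1))) * (z.1 γ - x.1 γ)) → y ∈ lo (n + 1 - j) := by
    intro j
    induction j with
    | zero =>
      intro _ y hy
      have : y = x := Subtype.ext (funext fun γ => by rw [hy]; simp)
      rw [this]; exact hx
    | succ j ih =>
      intro hj y hy
      have hr : ∀ i : ℕ, i ≤ n + 1 → (i:ℝ) / (2 * ((n:ℝ) + 1)) ∈ Set.Icc (0:ℝ) 1 := by
        intro i hi
        refine ⟨by positivity, ?_⟩
        rw [div_le_one (by positivity)]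
        have : (i:ℝ) ≤ (n:ℝ) + 1 := by exact_mod_cast hi
        linarith
      have h1 := ih (by omega) ⟨_, hpt _ (hr j (by omega))⟩ (fun γ => rfl)
      have h2 := hgap _ _ h1 y (fun γ => by
        rw [hy]
        have e : x.1 γ + ((j:ℝ) / (2 * ((n:ℝ) + 1))) * (z.1 γ - x.1 γ) -
            (x.1 γ + (((j + 1 : ℕ):ℝ) / (2 * ((n:ℝ) + 1))) * (z.1 γ - x.1 γ)) =
            (1 / (n + 1 : ℝ)) * ((x.1 γ - z.1 γ) / 2) := by
          push_cast
          field_simp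
          ring
        simp only [e]
        rw [abs_mul, abs_of_pos (by positivity)]
        have b : |(x.1 γ - z.1 γ) / 2| ≤ 1 := by
          have c1 := h01 _ x.2 γ
          have c2 := h01 _ z.2 γ
          rw [abs_le]
          constructor <;> linarith [c1.1, c1.2, c2.1, c2.2]
        calc _ ≤ (1 / (n + 1 : ℝ)) * 1 := by gcongr
          _ = _ := mul_one _)
      have h3 := hW y ⟨_, hr (j+1) hj, hy⟩
      have e : n + 1 - j = (n + 1 - (j + 1)) + 1 := by omega
      rw [e] at h2
      exact hdec _ y h3 h2
  have := main (n+1) le_rfl w (fun γ => by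
    rw [hw]
    push_cast
    field_simp
    ring)
  simpa using this

lemma part_two {Γ : Type*} (K : Set (Γ → ℝ)) (h01 : ∀ x ∈ K, ∀ γ, x γ ∈ Set.Icc (0:ℝ) 1)
    (hconv : Convex ℝ K) (hK : IsCompact K) : ¬ IsBooleanImage ↥(TreeSpace WOQ) ↥K := by
  classical
  rintro ⟨𝒢, φ, hcl, hsep, hiso⟩
  have hcomp := tree_compact
  -- the countable colouring
  let col : Bool × ℕ × ℚ → WOQ → Prop := fun c t => c.2.2 ∈ t.1 ∧ ∃ a ∈ 𝒢, PT t ∈ lit c.1 a ∧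
    (∀ x, x ∈ cone (restr t c.2.2) → x ∉ cone t → x ∉ lit c.1 a) ∧
    (∀ x ∈ loL φ c.1 a, ∀ y : K, (∀ γ, |x.1 γ - y.1 γ| ≤ 1 / ((c.2.1:ℝ) + 1)) → y ∈ hiL φ c.1 a)
  have hcol : ∀ t : WOQ, t.1.Nonempty → ∃ c, col c t := by
    intro t hne
    have hPQ : PT t ≠ QT t := by
      intro h
      have h1 : (QT t).1 t = true := h ▸ (PT_iff t t).2 le_rfl
      exact lt_irrefl _ ((QT_iff t t).1 h1)
    obtain ⟨a, ha, hs⟩ := hsep _ _ hPQ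
    have hs' : ∃ s, PT t ∈ lit s a ∧ QT t ∉ lit s a := by
      rcases hs with h | h
      · exact ⟨true, h.1, h.2⟩
      · exact ⟨false, h.2, fun h' => h' h.1⟩
    obtain ⟨s, hP, hQ⟩ := hs'
    obtain ⟨q, hq, hreg⟩ := regress (lit_clopen (hcl a ha) s).compl.isOpen t hne hQ
    obtain ⟨D, ε, hε, hD⟩ := unif_gap hK (loL_closed hiso ha s) (hiL_open hiso ha s)
      (loL_sub_hiL hiso ha s)
    obtain ⟨n, hn⟩ := exists_nat_one_div_lt hε
    exact ⟨⟨s, n, q⟩, hq, a, ha, hP, hreg, fun x hx y hy => hD x hx y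
      fun γ _ => (hy γ).trans_lt hn⟩
  obtain ⟨⟨s, n, q⟩, t0, q0, hb0, hdense⟩ := baire_tree col hcol
  obtain ⟨t1, ht01, hb1, hc1⟩ := hdense t0 le_rfl hb0
  have hqt1 : q ∈ t1.1 := hc1.1
  -- a neighbourhood generated by finitely many members of the family
  obtain ⟨Φ, hΦf, hΦ, hΦu⟩ := finite_nbhd 𝒢 hcl hsep (cone_isClopen (restr t1 q)).isOpen
    ((PT_mem_cone t1 _).2 (restr_le t1 q))
  let σ : Set (TreeSpace WOQ) → Bool := fun a => decide (PT t1 ∈ a)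
  have hσ : ∀ a y, y ∈ lit (σ a) a ↔ (y ∈ a ↔ PT t1 ∈ a) := by
    intro a y
    by_cases h : PT t1 ∈ a
    · simp [σ, h, lit]
    · simp [σ, h, lit]
  let W : Set (TreeSpace WOQ) := ⋂ a ∈ Φ, lit (σ a) a
  have hWmem : ∀ y, y ∈ W ↔ ∀ a ∈ Φ, y ∈ lit (σ a) a := fun y => by simp [W]
  have hWopen : IsOpen W := hΦf.isOpen_biInter fun a ha => (lit_clopen (hcl a (hΦ ha)) _).isOpen
  have hWt1 : PT t1 ∈ W := (hWmem _).2 fun a _ => (hσ a _).2 Iff.rfl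
  have hWu : W ⊆ cone (restr t1 q) := fun y hy =>
    hΦu y fun a ha => (hσ a y).1 ((hWmem y).1 hy a ha)
  obtain ⟨t2, ht12, hb2, ht2W⟩ := step_tree hWopen hWt1 hb1
  -- the good nodes
  let G : Type := {t : WOQ // col (s, n, q) t ∧ t2 < t ∧ Bd q0 t}
  have hG : ∀ g : G, ∃ a ∈ 𝒢, PT g.1 ∈ lit s a ∧ (∀ x, x ∈ W → x ∈ lit s a → x ∈ cone g.1) ∧
      (∀ x ∈ loL φ s a, ∀ y : K, (∀ γ, |x.1 γ - y.1 γ| ≤ 1 / ((n:ℝ) + 1)) → y ∈ hiL φ s a) := by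
    rintro ⟨t, ⟨hq, a, ha, hP, hreg, hun⟩, htt, hb⟩
    refine ⟨a, ha, hP, fun x hxW hxa => ?_, hun⟩
    by_contra hxt
    refine hreg x ?_ hxt hxa
    change x ∈ cone (restr t q)
    rw [restr_eq (ht12.le.trans htt.le) hqt1]
    exact hWu hxW
  choose A hA hAP hAW hAgap using hG
  have hPW : ∀ t, t2 ≤ t → PT t ∈ W := fun t ht => ht2W ((PT_mem_cone t t2).2 ht)
  have hAΦ : ∀ g : G, A g ∉ Φ := by
    intro g hg
    have h1 : PT g.1 ∈ lit (σ (A g)) (A g) := (hWmem _).1 (hPW _ g.2.2.1.le) _ hg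
    have h2 : PT t2 ∈ lit (σ (A g)) (A g) := (hWmem _).1 (hPW _ le_rfl) _ hg
    have h3 : σ (A g) = s := by
      by_contra hne
      have h4 : σ (A g) = !s := by cases h : σ (A g) <;> cases h' : s <;> simp_all
      rw [h4, lit_not] at h1
      exact h1 (hAP g)
    rw [h3] at h2
    have h5 := (PT_mem_cone _ _).1 (hAW g _ (hPW _ le_rfl) h2)
    exact absurd g.2.2.1 (not_lt_of_ge h5)
  have hAne : ∀ g g' : G, ¬ g'.1 ≤ g.1 → A g ≠ A g' := by
    intro g g' hgg he
    apply hgg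
    refine (PT_mem_cone _ _).1 (hAW g' _ (hPW _ g.2.2.1.le) ?_)
    rw [← he]; exact hAP g
  let WK : Set K := {k | ∀ c ∈ Φ, k ∈ hiL φ (σ c) c}
  let WKlo : Set K := {k | ∀ c ∈ Φ, k ∈ loL φ (σ c) c}
  -- nested pseudoclopens
  have hnest : ∀ g g' : G, g.1 < g'.1 → cone g'.1 ⊆ lit s (A g) → ∀ k ∈ WK,
      k ∈ hiL φ s (A g') → k ∈ loL φ s (A g) := by
    intro g g' hlt hsub k hk hk'
    rw [← lo_of_not_hi]
    intro hk2
    refine iso_two hiso Φ hΦf hΦ σ (hA g') (hA g) (hAΦ g') (hAΦ g)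
      (hAne g g' hlt.not_ge).symm s (!s) ?_ k hk hk' hk2
    intro x hx1 hx2 hx3
    rw [lit_not] at hx3
    exact hx3 (hsub (hAW g' x ((hWmem x).2 hx1) hx2))
  -- disjoint pseudoclopens
  have hdisj : ∀ g g' : G, ¬ g.1 ≤ g'.1 → ¬ g'.1 ≤ g.1 → ∀ k ∈ WK,
      k ∈ hiL φ s (A g) → k ∈ hiL φ s (A g') → False := by
    intro g g' h1 h2 k hk hk1 hk2
    refine iso_two hiso Φ hΦf hΦ σ (hA g) (hA g') (hAΦ g) (hAΦ g') (hAne g g' h2) s s ?_ k hk hk1 hk2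
    intro x hx1 hx2 hx3
    have hc : g.1 ≤ g'.1 ∨ g'.1 ≤ g.1 := x.2.1.total (hAW g x ((hWmem x).2 hx1) hx2)
      (hAW g' x ((hWmem x).2 hx1) hx3)
    exact hc.elim h1 h2
  have hpts : ∀ g : G, ∃ k, k ∈ WKlo ∧ k ∈ loL φ s (A g) := fun g =>
    iso_one hiso Φ hΦf hΦ σ (hA g) (hAΦ g) s (PT g.1) ((hWmem _).1 (hPW _ g.2.2.1.le)) (hAP g)
  -- successors
  have hnxt : ∀ g : G, ∃ g' : G, g.1 < g'.1 ∧ cone g'.1 ⊆ lit s (A g) := by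
    intro g
    obtain ⟨t', h1, h2, h3⟩ := step_tree (lit_clopen (hcl _ (hA g)) s).isOpen (hAP g) g.2.2.2
    obtain ⟨t'', h4, h5, h6⟩ := hdense t'
      (ht01.trans (ht12.le.trans (g.2.2.1.le.trans h1.le))) h2
    exact ⟨⟨t'', h6, g.2.2.1.trans (h1.trans_le h4), h5⟩, h1.trans_le h4, (cone_anti h4).trans h3⟩
  choose nxt hnxt1 hnxt2 using hnxt
  -- infinitely many incomparable starting nodes
  obtain ⟨p, hp, hp'⟩ := id hb2
  obtain ⟨r, hr⟩ : ∃ r : ℕ → ℚ, Function.Injective r ∧ ∀ i, r i ∈ Set.Ioo p q0 := by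
    have : Infinite (Set.Ioo p q0) := (Set.Ioo_infinite hp).to_subtype
    exact ⟨fun i => (Infinite.natEmbedding (Set.Ioo p q0) i).1,
      fun i j h => (Infinite.natEmbedding (Set.Ioo p q0)).injective (Subtype.ext h),
      fun i => (Infinite.natEmbedding (Set.Ioo p q0) i).2⟩
  have hrt : ∀ i, ∀ x ∈ t2.1, x < r i := fun i x hx => (hp' x hx).trans (hr.2 i).1
  have hst : ∀ i : ℕ, ∃ g : G, addPt t2 (r i) ≤ g.1 := by
    intro i
    obtain ⟨t'', h4, h5, h6⟩ := hdense (addPt t2 (r i))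
      (ht01.trans (ht12.le.trans (lt_addPt (hrt i)).le)) (addPt_Bd (hrt i) (hr.2 i).2)
    exact ⟨⟨t'', h6, (lt_addPt (hrt i)).trans_le h4, h5⟩, h4⟩
  choose st hst using hst
  have hinc : ∀ i j, i ≠ j → ¬ (st i).1 ≤ (st j).1 := by
    intro i j hij hle
    exact hij (hr.1 (addPt_unique (hrt i) (hrt j) ((hst i).trans hle) (hst j)))
  let g : ℕ → ℕ → G := fun i j => nxt^[j] (st i)
  have hgs : ∀ i j, g i (j+1) = nxt (g i j) := fun i j => Function.iterate_succ_apply' nxt j (st i)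
  choose pt hptW hptA using hpts
  let x : ℕ → K := fun i => pt (g i (n+1))
  -- gap of the finite neighbourhood
  have hWKc : IsClosed WKlo := by
    have : WKlo = ⋂ c ∈ Φ, loL φ (σ c) c := by ext k; simp [WKlo]
    rw [this]
    exact isClosed_biInter fun c hc => loL_closed hiso (hΦ hc) _
  have hWKo : IsOpen WK := by
    have : WK = ⋂ c ∈ Φ, hiL φ (σ c) c := by ext k; simp [WK]
    rw [this]
    exact hΦf.isOpen_biInter fun c hc => hiL_open hiso (hΦ hc) _
  obtain ⟨D, ε, hε, hD⟩ := unif_gap hK hWKc hWKo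
    (fun k hk c hc => loL_sub_hiL hiso (hΦ hc) _ (hk c hc))
  obtain ⟨i, j, hij, hclose⟩ := close_pair hK x D hε
  have hseg : ∀ i j, (∀ γ ∈ D, |(x i).1 γ - (x j).1 γ| < ε) → ∀ y : K,
      (∃ r ∈ Set.Icc (0:ℝ) 1, ∀ γ, y.1 γ = (x i).1 γ + r * ((x j).1 γ - (x i).1 γ)) → y ∈ WK := by
    rintro i j hc y ⟨ρ, hρ, hy⟩
    refine hD (x i) (hptW _) y fun γ hγ => ?_
    rw [hy]
    have e : (x i).1 γ - ((x i).1 γ + ρ * ((x j).1 γ - (x i).1 γ)) =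
        ρ * ((x i).1 γ - (x j).1 γ) := by ring
    rw [e, abs_mul, abs_of_nonneg hρ.1]
    calc ρ * |(x i).1 γ - (x j).1 γ| ≤ 1 * |(x i).1 γ - (x j).1 γ| := by
          gcongr
          exact hρ.2
      _ < ε := by rw [one_mul]; exact hc γ hγ
  have hmid : (fun γ => ((x i).1 γ + (x j).1 γ) / 2) ∈ K := by
    have := hconv (x i).2 (x j).2 (a := 1/2) (b := 1/2) (by norm_num) (by norm_num) (by norm_num)
    convert this using 1
    funext γ
    simp only [Pi.add_apply, Pi.smul_apply, smul_eq_mul]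
    ring
  have hrun : ∀ i j, (∀ γ ∈ D, |(x i).1 γ - (x j).1 γ| < ε) → ∀ w : K,
      (∀ γ, w.1 γ = ((x i).1 γ + (x j).1 γ) / 2) → w ∈ loL φ s (A (st i)) := by
    intro i j hc w hw
    refine segment_lemma h01 hconv n WK (fun m => loL φ s (A (g i m)))
      (fun m => hiL φ s (A (g i m))) (fun m => hAgap _) ?_ (x i) (x j) (hptA _) (hseg i j hc) w hw
    intro m y hyW hy
    simp only [hgs] at hy
    exact hnest _ _ (hnxt1 _) (hnxt2 _) y hyW hy
  have hw1 := hrun i j hclose ⟨_, hmid⟩ (fun γ => rfl)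
  have hw2 := hrun j i (fun γ hγ => by rw [abs_sub_comm]; exact hclose γ hγ) ⟨_, hmid⟩
    (fun γ => by simp only []; ring)
  have hwW := hseg i j hclose ⟨_, hmid⟩ ⟨1/2, ⟨by norm_num, by norm_num⟩, fun γ => by simp only []; ring⟩
  exact hdisj (st i) (st j) (hinc i j hij) (hinc j i hij.symm) _ hwW
    (loL_sub_hiL hiso (hA _) s hw1) (loL_sub_hiL hiso (hA _) s hw2)

/-- The tree space of the tree of well-ordered subsets of `ℚ` is a
Boolean image of a path-connected compact Hausdorff space, but is not a Boolean
image of any convex compact subset of a Tikhonov cube `[0,1]^Γ`. -/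
theorem tree_space_WOQ_not_boolean_image_of_convex :
    (∃ (K : Type) (_ : TopologicalSpace K) (_ : CompactSpace K) (_ : T2Space K)
       (_ : PathConnectedSpace K), IsBooleanImage ↥(TreeSpace WOQ) K) ∧
    (∀ (Γ : Type*) (K : Set (Γ → ℝ)), (∀ x ∈ K, ∀ γ, x γ ∈ Set.Icc (0:ℝ) 1) →
      Convex ℝ K → IsCompact K → ¬ IsBooleanImage ↥(TreeSpace WOQ) ↥K) := by

  exact ⟨part_one, fun Γ K h01 hconv hK => part_two K h01 hconv hK⟩
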